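/- arXiv:2501.00299 — 5 statements merged into one kernel-verified Lean document; each statement's English description precedes it below -/
import Mathlib

section
/- Let p > 1. Then for every finitely supported sequence u : ℕ → ℝ with u_0 = u_1 = 0, ∑_{n=2}^∞ |u_n - u_{n-1}|^p n^{p-1} ≥ ((p-1)/p)^p · ∑_{n=2}^∞ |u_n|^p / (n (log n)^p). -/
lemma young_aux (p : ℝ) (hp : 1 < p) (x y : ℝ) (hx : 0 ≤ x) (hy : 0 ≤ y) :
    p * (y * x ^ (p - 1)) ≤ y ^ p + (p - 1) * x ^ p := by
  have hp0 : 0 < p - 1 := by linarith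
  have h := Real.young_inequality_of_nonneg hy (Real.rpow_nonneg hx (p - 1))
    (Real.HolderConjugate.conjExponent hp)
  rw [← Real.rpow_mul hx, Real.conjExponent, mul_div_cancel₀ p hp0.ne'] at h
  have h2 := mul_le_mul_of_nonneg_left h (by linarith : 0 ≤ p)
  have e : p * (y ^ p / p + x ^ p / (p / (p - 1))) = y ^ p + (p - 1) * x ^ p := by
    field_simp
  linarith

lemma step_aux (p : ℝ) (hp : 1 < p) (x y a l M : ℝ) (hx : 0 ≤ x) (hy : 0 ≤ y) (ha : 0 ≤ a)
    (hl : 0 < l) (hM : 0 ≤ M) (h : (M + l) * x - M * y ≤ l * a) :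
    l * x ^ p - (p / (p - 1)) ^ p * (l * a ^ p) ≤
      p / (p - 1) * (M * y ^ p - (M + l) * x ^ p) := by
  have hp0 : 0 < p - 1 := by linarith
  have hq : 0 < p / (p - 1) := by positivity
  have y1 := mul_le_mul_of_nonneg_left (young_aux p hp x y hx hy) hM
  have y2 := mul_le_mul_of_nonneg_left (young_aux p hp x (p / (p - 1) * a) hx (by positivity)) hl.le
  rw [Real.mul_rpow hq.le ha] at y2
  have h3 := mul_le_mul_of_nonneg_right h (Real.rpow_nonneg hx (p - 1))
  have e : x * x ^ (p - 1) = x ^ p := by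
    rw [mul_comm, ← Real.rpow_add_one' hx (by linarith)]; simp
  set X := x ^ (p - 1)
  set Q := (p / (p - 1)) ^ p
  have hqe : (p / (p - 1)) * (p - 1) = p := by field_simp
  set q := p / (p - 1)
  have h3' : (M + l) * x ^ p - M * (y * X) ≤ l * (a * X) := by rw [← e]; linarith
  have h4 := mul_le_mul_of_nonneg_left h3' (by positivity : 0 ≤ q * p)
  have h5 := mul_le_mul_of_nonneg_left y1 hq.le
  have e6 : q * (M * (y ^ p + (p - 1) * x ^ p)) = q * (M * y ^ p) + p * M * x ^ p := by
    linear_combination (M * x ^ p) * hqe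
  have e7 : q * p = q + p := by linarith
  have e8 : q * p * ((M + l) * x ^ p - M * (y * X))
      = (q + p) * ((M + l) * x ^ p) - q * (M * (p * (y * X))) := by rw [← e7]; ring
  nlinarith

/-- Proposition 4.7: discrete Leray-type inequality in the critical case `α = p - 1`,
with the continuous sharp constant `((p-1)/p)^p`, for sequences vanishing at `0` and `1`. -/
theorem stmt_15 (p : ℝ) (hp : 1 < p) :
    ∀ u : ℕ → ℝ, (Function.support u).Finite → u 0 = 0 → u 1 = 0 →
      ∑' n : ℕ, |u (n + 2) - u (n + 1)| ^ p * ((n : ℝ) + 2) ^ (p - 1) ≥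
        ((p - 1) / p) ^ p *
          ∑' n : ℕ, |u (n + 2)| ^ p / (((n : ℝ) + 2) * Real.log ((n : ℝ) + 2) ^ p) := by
  intro u hu _ h1
  have hp0 : 0 < p - 1 := by linarith
  have hpp : p ≠ 0 := by linarith
  obtain ⟨N, hN⟩ := hu.bddAbove
  have hz : ∀ n, N < n → u n = 0 := by
    intro n hn
    by_contra hne
    exact absurd (hN (Function.mem_support.2 hne)) (not_le.2 hn)
  rw [tsum_eq_sum (s := Finset.range N), tsum_eq_sum (s := Finset.range N)]
  rotate_left
  · intro b hb
    have : N ≤ b := by simpa using hb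
    rw [hz (b + 2) (by omega)]; simp [Real.zero_rpow hpp]
  · intro b hb
    have : N ≤ b := by simpa using hb
    rw [hz (b + 2) (by omega), hz (b + 1) (by omega)]; simp [Real.zero_rpow hpp]
  set T : ℕ → ℝ := fun k => Real.log ((k : ℝ) + 1) * (|u (k + 1)| / Real.log ((k : ℝ) + 1)) ^ p
    with hT
  have hTn : ∀ k, 0 ≤ T k := by
    intro k
    have : 0 ≤ Real.log ((k : ℝ) + 1) := Real.log_nonneg (by linarith [k.cast_nonneg (α := ℝ)])
    simp only [hT]; positivity
  have hT0 : T 0 = 0 := by simp [hT]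
  have key : ∀ k : ℕ, |u (k + 2)| ^ p / (((k : ℝ) + 2) * Real.log ((k : ℝ) + 2) ^ p) -
      (p / (p - 1)) ^ p * (|u (k + 2) - u (k + 1)| ^ p * ((k : ℝ) + 2) ^ (p - 1)) ≤
      p / (p - 1) * (T k - T (k + 1)) := by
    intro k
    have hk : (0 : ℝ) ≤ k := k.cast_nonneg
    have hM : 0 ≤ Real.log ((k : ℝ) + 1) := Real.log_nonneg (by linarith)
    have hL : 0 < Real.log ((k : ℝ) + 2) := Real.log_pos (by linarith)
    have hl : 1 / ((k : ℝ) + 2) ≤ Real.log ((k : ℝ) + 2) - Real.log ((k : ℝ) + 1) := by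
      have := Real.log_le_sub_one_of_pos (x := ((k : ℝ) + 1) / (k + 2)) (by positivity)
      rw [Real.log_div (by positivity) (by positivity)] at this
      have e : ((k : ℝ) + 1) / (k + 2) - 1 = - (1 / (k + 2)) := by field_simp; ring
      linarith
    have hT1 : T (k + 1) = Real.log ((k : ℝ) + 2) * (|u (k + 2)| / Real.log ((k : ℝ) + 2)) ^ p := by
      simp only [hT]; push_cast; rw [show (k : ℝ) + 1 + 1 = k + 2 by ring]
    rw [hT1]
    simp only [hT]
    set M := Real.log ((k : ℝ) + 1) with hMd
    set L := Real.log ((k : ℝ) + 2)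
    have hlp : 0 < L - M := lt_of_lt_of_le (by positivity) hl
    have hMy : M * (|u (k + 1)| / M) = |u (k + 1)| := by
      rcases eq_or_ne M 0 with h0 | h0
      · have : k = 0 := by
          by_contra hk0
          have : (1 : ℝ) ≤ k := by exact_mod_cast Nat.one_le_iff_ne_zero.2 hk0
          have : 0 < M := Real.log_pos (by linarith)
          linarith
        subst this
        simp [h1]
      · field_simp
    have st := step_aux p hp (|u (k + 2)| / L) (|u (k + 1)| / M)
      (|u (k + 2) - u (k + 1)| / (L - M)) (L - M) M (by positivity) (by positivity)
      (by positivity) hlp hM (by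
        rw [hMy, show M + (L - M) = L by ring, mul_div_cancel₀ _ hL.ne',
          mul_div_cancel₀ _ hlp.ne']
        exact abs_sub_abs_le_abs_sub _ _)
    rw [show M + (L - M) = L by ring] at st
    refine le_trans (sub_le_sub ?_ (mul_le_mul_of_nonneg_left ?_ (by positivity))) st
    · rw [Real.div_rpow (abs_nonneg _) hL.le]
      calc _ = 1 / ((k : ℝ) + 2) * (|u (k + 2)| ^ p / L ^ p) := by field_simp
        _ ≤ _ := by gcongr
    · rw [Real.div_rpow (abs_nonneg _) hlp.le]
      calc _ = |u (k + 2) - u (k + 1)| ^ p * ((L - M)⁻¹) ^ (p - 1) := by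
            rw [Real.inv_rpow hlp.le, Real.rpow_sub_one hlp.ne']; field_simp
        _ ≤ _ := by
            gcongr
            rw [inv_le_comm₀ hlp (by positivity), ← one_div]; exact hl
  have hs := Finset.sum_le_sum (fun k (_ : k ∈ Finset.range N) => key k)
  rw [Finset.sum_sub_distrib, ← Finset.mul_sum, ← Finset.mul_sum, Finset.sum_range_sub', hT0] at hs
  have hr : p / (p - 1) * (0 - T N) ≤ 0 :=
    mul_nonpos_of_nonneg_of_nonpos (by positivity) (by linarith [hTn N])
  have hc : ((p - 1) / p) ^ p * (p / (p - 1)) ^ p = 1 := by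
    rw [← Real.mul_rpow (by positivity) (by positivity)]
    rw [show (p - 1) / p * (p / (p - 1)) = 1 by field_simp, Real.one_rpow]
  have hf := mul_le_mul_of_nonneg_left (sub_nonpos.1 (hs.trans hr))
    (by positivity : 0 ≤ ((p - 1) / p) ^ p)
  rw [← mul_assoc, hc, one_mul] at hf
  exact hf
end

section
/- Let p > 1 and let α < 0 be a real number. Then for every finitely supported sequence u : ℕ → ℝ with u_0 = 0, ∑_{n=1}^∞ |u_n - u_{n-1}|^p n^α ≥ 2^{α-p} · ((p - 1 - α)/p)^p · ∑_{n=1}^∞ |u_n|^p n^{α-p}. -/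
lemma aux_picone (p : ℝ) (hp : 1 < p) (G h a b : ℝ) (hG : 0 ≤ G) (hh : 0 < h)
    (hb : G = 0 → b = 0) :
    h ^ (p - 1) * (|a| ^ p / (G + h) ^ (p - 1) - |b| ^ p / G ^ (p - 1)) ≤ |a - b| ^ p := by
  have hhp : 0 < h ^ (p - 1) := Real.rpow_pos_of_pos hh _
  have hp0 : p ≠ 0 := by linarith
  rcases hG.eq_or_lt with h0 | hG
  · subst h0
    have := hb rfl
    subst this
    simp only [abs_zero, Real.zero_rpow hp0, zero_div, sub_zero, zero_add]
    apply le_of_eq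
    field_simp
  · have hGp : 0 < G ^ (p - 1) := Real.rpow_pos_of_pos hG _
    have hS : 0 < G + h := by linarith
    have hSp : 0 < (G + h) ^ (p - 1) := Real.rpow_pos_of_pos hS _
    have key : ∀ t : ℝ, 0 < t → t ^ p = t * t ^ (p - 1) := by
      intro t ht
      rw [Real.rpow_sub_one ht.ne']
      field_simp
    have hc := (convexOn_rpow hp.le).2
      (show |a - b| / h ∈ Set.Ici 0 from Set.mem_Ici.2 (by positivity))
      (show |b| / G ∈ Set.Ici 0 from Set.mem_Ici.2 (by positivity))
      (show 0 ≤ h / (G + h) by positivity) (show 0 ≤ G / (G + h) by positivity)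
      (by field_simp; ring)
    simp only [smul_eq_mul] at hc
    have e1 : h / (G + h) * (|a - b| / h) + G / (G + h) * (|b| / G)
        = (|a - b| + |b|) / (G + h) := by
      field_simp
    rw [e1, Real.div_rpow (by positivity) hS.le, Real.div_rpow (by positivity) hh.le,
      Real.div_rpow (by positivity) hG.le, key _ hS, key _ hh, key _ hG] at hc
    have tri : |a| ^ p ≤ (|a - b| + |b|) ^ p := by
      apply Real.rpow_le_rpow (abs_nonneg _) _ (by linarith)
      have := abs_add_le (a - b) b
      simpa using this
    have h2 : |a| ^ p / (G + h) ^ (p - 1) ≤ |a - b| ^ p / h ^ (p - 1) + |b| ^ p / G ^ (p - 1) := by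
      calc |a| ^ p / (G + h) ^ (p - 1) ≤ (|a - b| + |b|) ^ p / (G + h) ^ (p - 1) := by gcongr
        _ = (G + h) * ((|a - b| + |b|) ^ p / ((G + h) * (G + h) ^ (p - 1))) := by field_simp
        _ ≤ _ := mul_le_mul_of_nonneg_left hc hS.le
        _ = _ := by field_simp
    calc _ ≤ h ^ (p - 1) * (|a - b| ^ p / h ^ (p - 1)) := by
          gcongr; linarith
      _ = _ := by field_simp

lemma aux_mean (γ m : ℝ) (hγ : 0 < γ) (hm : 0 < m) :
    γ * (m + 1) ^ (-γ - 1) ≤ m ^ (-γ) - (m + 1) ^ (-γ) := by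
  have hm1 : 0 < m + 1 := by linarith
  have e : m ^ (-γ) = (m + 1) ^ (-γ) * (m / (m + 1)) ^ (-γ) := by
    rw [← Real.mul_rpow hm1.le (by positivity)]
    congr 1; field_simp
  have hl : Real.log (m / (m + 1)) ≤ m / (m + 1) - 1 := Real.log_le_sub_one_of_pos (by positivity)
  have hx : 1 + γ / (m + 1) ≤ (m / (m + 1)) ^ (-γ) := by
    rw [Real.rpow_def_of_pos (by positivity)]
    have := Real.add_one_le_exp (Real.log (m / (m + 1)) * (-γ))
    have e2 : m / (m + 1) - 1 = - (1 / (m + 1)) := by field_simp; ring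
    rw [e2] at hl
    have : γ * Real.log (m / (m + 1)) ≤ γ * (-(1 / (m + 1))) := by gcongr
    have e3 : γ * (-(1 / (m + 1))) = - (γ / (m + 1)) := by ring
    linarith
  have hpos : 0 < (m + 1) ^ (-γ) := Real.rpow_pos_of_pos hm1 _
  rw [e, Real.rpow_sub_one hm1.ne']
  have := mul_le_mul_of_nonneg_left hx hpos.le
  have e4 : γ * ((m + 1) ^ (-γ) / (m + 1)) = (m + 1) ^ (-γ) * (1 + γ / (m + 1)) - (m + 1) ^ (-γ) := by
    ring
  linarith

noncomputable def auxg (γ : ℝ) (N : ℕ) : ℝ :=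
  ∑ k ∈ Finset.range N, γ * ((k : ℝ) + 1) ^ (γ - 1)

lemma auxg_nonneg (γ : ℝ) (hγ : 0 < γ) (N : ℕ) : 0 ≤ auxg γ N :=
  Finset.sum_nonneg fun k _ => by positivity

lemma auxg_succ (γ : ℝ) (N : ℕ) : auxg γ (N + 1) = auxg γ N + γ * ((N : ℝ) + 1) ^ (γ - 1) :=
  Finset.sum_range_succ _ _

lemma auxg_bound (γ : ℝ) (hγ : 0 < γ) (n : ℕ) :
    auxg γ (n + 1) ≤ (2 * ((n : ℝ) + 1)) ^ γ := by
  rcases le_total 1 γ with h1 | h1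
  · have H : ∀ N : ℕ, auxg γ N ≤ ((N : ℝ) + 1) ^ γ := by
      intro N
      induction N with
      | zero => simp [auxg]
      | succ N ih =>
        rw [auxg_succ]
        have hN : (0 : ℝ) < (N : ℝ) + 1 := by positivity
        have hb := one_add_mul_self_le_rpow_one_add (s := 1 / ((N : ℝ) + 1))
          (by have : (0 : ℝ) < 1 / ((N : ℝ) + 1) := by positivity
              linarith) h1
        have e : (((N + 1 : ℕ) : ℝ) + 1) ^ γ = ((N : ℝ) + 1) ^ γ * (1 + 1 / ((N : ℝ) + 1)) ^ γ := by
          rw [← Real.mul_rpow hN.le (by positivity)]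
          congr 1; push_cast; field_simp
        have hpos : 0 < ((N : ℝ) + 1) ^ γ := Real.rpow_pos_of_pos hN _
        have := mul_le_mul_of_nonneg_left hb hpos.le
        rw [e, Real.rpow_sub_one hN.ne']
        have e4 : γ * (((N : ℝ) + 1) ^ γ / ((N : ℝ) + 1))
          = ((N : ℝ) + 1) ^ γ * (1 + γ * (1 / ((N : ℝ) + 1))) - ((N : ℝ) + 1) ^ γ := by ring
        linarith
    refine (H _).trans ?_
    apply Real.rpow_le_rpow (by positivity) _ hγ.le
    push_cast
    have : (0 : ℝ) ≤ n := by positivity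
    linarith
  · have H : ∀ N : ℕ, auxg γ N ≤ (N : ℝ) ^ γ := by
      intro N
      induction N with
      | zero => simp [auxg, Real.zero_rpow hγ.ne']
      | succ N ih =>
        rw [auxg_succ]
        have hN : (0 : ℝ) < (N : ℝ) + 1 := by positivity
        have hb := rpow_one_add_le_one_add_mul_self (s := -(1 / ((N : ℝ) + 1)))
          (by have : 1 / ((N : ℝ) + 1) ≤ 1 := by
                rw [div_le_one hN]; have : (0 : ℝ) ≤ N := by positivity
                linarith
              linarith) hγ.le h1
        have e0 : 1 + -(1 / ((N : ℝ) + 1)) = N / ((N : ℝ) + 1) := by field_simp; ring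
        have e : (N : ℝ) ^ γ = ((N : ℝ) + 1) ^ γ * (1 + -(1 / ((N : ℝ) + 1))) ^ γ := by
          rw [e0, ← Real.mul_rpow hN.le (by positivity)]
          congr 1; field_simp
        have hpos : 0 < ((N : ℝ) + 1) ^ γ := Real.rpow_pos_of_pos hN _
        have := mul_le_mul_of_nonneg_left hb hpos.le
        rw [e] at ih
        rw [Real.rpow_sub_one hN.ne']
        push_cast
        have e4 : γ * (((N : ℝ) + 1) ^ γ / ((N : ℝ) + 1))
          = ((N : ℝ) + 1) ^ γ - ((N : ℝ) + 1) ^ γ * (1 + γ * -(1 / ((N : ℝ) + 1))) := by ring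
        linarith
    refine (H _).trans ?_
    apply Real.rpow_le_rpow (by positivity) _ hγ.le
    push_cast
    have : (0 : ℝ) ≤ n := by positivity
    linarith

lemma aux_key (p α γ : ℝ) (hp : 1 < p) (hγ : 0 < γ) (h : γ * p = p - 1 - α) (n : ℕ) :
    (2 : ℝ) ^ (α - p) * γ ^ p * ((n : ℝ) + 1) ^ (α - p) * auxg γ (n + 1) ^ (p - 1) ≤
      γ ^ (p - 1) * ((n : ℝ) + 1) ^ (-γ) - γ ^ (p - 1) * ((n : ℝ) + 1 + 1) ^ (-γ) := by
  have hm : (0 : ℝ) < (n : ℝ) + 1 := by positivity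
  have h1 : auxg γ (n + 1) ^ (p - 1) ≤ (2 * ((n : ℝ) + 1)) ^ (γ * (p - 1)) := by
    rw [Real.rpow_mul (by positivity)]
    exact Real.rpow_le_rpow (auxg_nonneg γ hγ _) (auxg_bound γ hγ n) (by linarith)
  have h2 : (2 * ((n : ℝ) + 1)) ^ (-γ - 1) ≤ ((n : ℝ) + 1 + 1) ^ (-γ - 1) := by
    apply Real.rpow_le_rpow_of_nonpos (by positivity) _ (by linarith)
    have : (0 : ℝ) ≤ n := by positivity
    linarith
  calc _ ≤ (2 : ℝ) ^ (α - p) * γ ^ p * ((n : ℝ) + 1) ^ (α - p) * (2 * ((n : ℝ) + 1)) ^ (γ * (p - 1)) := by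
        gcongr
    _ = γ ^ p * ((2 * ((n : ℝ) + 1)) ^ (α - p) * (2 * ((n : ℝ) + 1)) ^ (γ * (p - 1))) := by
        rw [Real.mul_rpow (z := α - p) (by positivity) hm.le]; ring
    _ = γ ^ p * (2 * ((n : ℝ) + 1)) ^ (-γ - 1) := by
        rw [← Real.rpow_add (by positivity)]
        congr 2; linarith
    _ ≤ γ ^ p * ((n : ℝ) + 1 + 1) ^ (-γ - 1) := by gcongr
    _ = γ ^ (p - 1) * (γ * ((n : ℝ) + 1 + 1) ^ (-γ - 1)) := by
        rw [Real.rpow_sub_one hγ.ne']; field_simp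
    _ ≤ γ ^ (p - 1) * (((n : ℝ) + 1) ^ (-γ) - ((n : ℝ) + 1 + 1) ^ (-γ)) := by
        gcongr
        exact aux_mean γ _ hγ hm
    _ = _ := by ring

lemma aux_fin (p α γ : ℝ) (hp : 1 < p) (hγ : 0 < γ) (h : γ * p = p - 1 - α)
    (u : ℕ → ℝ) (u0 : u 0 = 0) (N : ℕ) :
    (2 : ℝ) ^ (α - p) * γ ^ p *
        (∑ n ∈ Finset.range N, |u (n + 1)| ^ p * ((n : ℝ) + 1) ^ (α - p))
      + γ ^ (p - 1) * ((N : ℝ) + 1) ^ (-γ) * (|u N| ^ p / auxg γ N ^ (p - 1))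
      ≤ ∑ n ∈ Finset.range N, |u (n + 1) - u n| ^ p * ((n : ℝ) + 1) ^ α := by
  induction N with
  | zero => simp [u0, Real.zero_rpow (show p ≠ 0 by linarith)]
  | succ N ih =>
    rw [Finset.sum_range_succ, Finset.sum_range_succ, mul_add]
    have hN : (0 : ℝ) < (N : ℝ) + 1 := by positivity
    have hh : 0 < γ * ((N : ℝ) + 1) ^ (γ - 1) := by positivity
    have hg := auxg_nonneg γ hγ N
    have hg1 : 0 < auxg γ (N + 1) := by rw [auxg_succ]; linarith
    have hP := aux_picone p hp (auxg γ N) _ (u (N + 1)) (u N) hg hh (by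
      intro h0
      cases N with
      | zero => exact u0
      | succ k =>
        rw [auxg_succ] at h0
        have := auxg_nonneg γ hγ k
        have : 0 < γ * ((k : ℝ) + 1) ^ (γ - 1) := by positivity
        linarith)
    rw [← auxg_succ] at hP
    have hP2 := mul_le_mul_of_nonneg_right hP (Real.rpow_nonneg hN.le α)
    have eA : (γ * ((N : ℝ) + 1) ^ (γ - 1)) ^ (p - 1) * ((N : ℝ) + 1) ^ α
        = γ ^ (p - 1) * ((N : ℝ) + 1) ^ (-γ) := by
      rw [Real.mul_rpow hγ.le (by positivity), ← Real.rpow_mul hN.le, mul_assoc,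
        ← Real.rpow_add hN]
      congr 2; linarith
    rw [mul_right_comm, eA, mul_sub] at hP2
    have hK := aux_key p α γ hp hγ h N
    have hgp : 0 < auxg γ (N + 1) ^ (p - 1) := Real.rpow_pos_of_pos hg1 _
    have hK2 := mul_le_mul_of_nonneg_right hK
      (show 0 ≤ |u (N + 1)| ^ p / auxg γ (N + 1) ^ (p - 1) by positivity)
    have e5 : (2 : ℝ) ^ (α - p) * γ ^ p * ((N : ℝ) + 1) ^ (α - p) * auxg γ (N + 1) ^ (p - 1) *
        (|u (N + 1)| ^ p / auxg γ (N + 1) ^ (p - 1))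
        = (2 : ℝ) ^ (α - p) * γ ^ p * (|u (N + 1)| ^ p * ((N : ℝ) + 1) ^ (α - p)) := by
      field_simp
    rw [e5, sub_mul] at hK2
    push_cast
    linarith

/-- Proposition 4.8 (lower bound): for `p > 1` and `α < 0`, the discrete weighted
`p`-Hardy inequality holds with constant `2^{α-p} ((p-1-α)/p)^p`. -/
theorem stmt_16 (p α : ℝ) (hp : 1 < p) (hα : α < 0) :
    ∀ u : ℕ → ℝ, (Function.support u).Finite → u 0 = 0 →
      ∑' n : ℕ, |u (n + 1) - u n| ^ p * ((n : ℝ) + 1) ^ α ≥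
        (2 : ℝ) ^ (α - p) * ((p - 1 - α) / p) ^ p *
          ∑' n : ℕ, |u (n + 1)| ^ p * ((n : ℝ) + 1) ^ (α - p) := by
  intro u hu u0
  have hp0 : p ≠ 0 := by linarith
  obtain ⟨M, hM⟩ := hu.bddAbove
  have hz : ∀ n, M < n → u n = 0 := by
    intro n hn
    by_contra hne
    exact absurd (hM (Function.mem_support.2 hne)) (by omega)
  have hγ : 0 < (p - 1 - α) / p := div_pos (by linarith) (by linarith)
  have hF := aux_fin p α _ hp hγ (by field_simp) u u0 (M + 1)
  rw [tsum_eq_sum (s := Finset.range (M + 1)), tsum_eq_sum (s := Finset.range (M + 1))]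
  · rw [hz (M + 1) (by omega)] at hF
    simpa [Real.zero_rpow hp0] using hF
  · intro n hn
    rw [Finset.mem_range] at hn
    rw [hz (n + 1) (by omega)]
    simp [Real.zero_rpow hp0]
  · intro n hn
    rw [Finset.mem_range] at hn
    rw [hz (n + 1) (by omega), hz n (by omega)]
    simp [Real.zero_rpow hp0]
end

section
/- Let p > 1 and let α < 0 be a real number. If C > 0 is a constant such that ∑_{n=1}^∞ |u_n - u_{n-1}|^p n^α ≥ C · ∑_{n=1}^∞ |u_n|^p n^{α-p} holds for every finitely supported sequence u : ℕ → ℝ with u_0 = 0, then C ≤ ((p - 1 - α)/p)^p. That is, the sharp discrete constant is at most the sharp continuous constant ((p-1-α)/p)^p. -/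
lemma term_bound (p α : ℝ) (hp : 1 < p) (hα : α < 0) (g : ℝ) (hg : g = (p - 1 - α) / p)
    (k : ℕ) (hk : 0 < k) :
    |((k:ℝ) + 1) ^ g - (k:ℝ) ^ g| ^ p * ((k : ℝ) + 1) ^ α ≤ g ^ p * (1 / (k:ℝ)) := by
  have hk0 : (0:ℝ) < k := by exact_mod_cast hk
  have hg0 : 0 < g := by rw [hg]; apply div_pos <;> linarith
  obtain ⟨x, ⟨hx1, hx2⟩, hx⟩ := exists_hasDerivAt_eq_slope (fun x : ℝ => x ^ g)
    (fun x : ℝ => g * x ^ (g - 1)) (show (k:ℝ) < k + 1 by linarith)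
    (fun x hx => (Real.continuousAt_rpow_const x g (Or.inr hg0.le)).continuousWithinAt)
    (fun x hx => Real.hasDerivAt_rpow_const (Or.inl (by linarith [hx.1])))
  have hx0 : 0 < x := by linarith
  have e : ((k:ℝ) + 1) ^ g - (k:ℝ) ^ g = g * x ^ (g - 1) := by
    simp only [add_sub_cancel_left, div_one] at hx
    exact hx.symm
  have hexp : (g - 1) * p + α = -1 := by
    rw [hg]; field_simp; ring
  rw [e, abs_of_nonneg (by positivity), Real.mul_rpow hg0.le (by positivity), ← Real.rpow_mul hx0.le,
    mul_assoc]
  apply mul_le_mul_of_nonneg_left _ (by positivity)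
  calc x ^ ((g - 1) * p) * ((k:ℝ) + 1) ^ α ≤ x ^ ((g - 1) * p) * x ^ α := by
        apply mul_le_mul_of_nonneg_left _ (by positivity)
        exact Real.rpow_le_rpow_of_nonpos hx0 hx2.le hα.le
    _ = 1 / x := by rw [← Real.rpow_add hx0, hexp, Real.rpow_neg_one, one_div]
    _ ≤ 1 / k := one_div_le_one_div_of_le hk0 hx1.le

lemma cut_bound (p α : ℝ) (hp : 1 < p) (hα : α < 0) (g : ℝ) (hg : g = (p - 1 - α) / p)
    (N k : ℕ) (hN : 0 < N) :
    ((N:ℝ) ^ (g - 1)) ^ p * (((N + k : ℕ) : ℝ) + 1) ^ α ≤ 1 / N := by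
  have hN0 : (0:ℝ) < N := by exact_mod_cast hN
  have hexp : (g - 1) * p + α = -1 := by
    rw [hg]; field_simp; ring
  rw [← Real.rpow_mul hN0.le]
  calc (N:ℝ) ^ ((g - 1) * p) * (((N + k : ℕ) : ℝ) + 1) ^ α ≤ (N:ℝ) ^ ((g - 1) * p) * (N:ℝ) ^ α := by
        apply mul_le_mul_of_nonneg_left _ (by positivity)
        apply Real.rpow_le_rpow_of_nonpos hN0 _ hα.le
        push_cast
        have : (0:ℝ) ≤ k := by positivity
        linarith
    _ = 1 / N := by rw [← Real.rpow_add hN0, hexp, Real.rpow_neg_one, one_div]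

lemma key (p α : ℝ) (hp : 1 < p) (hα : α < 0) (g : ℝ) (hg : g = (p - 1 - α) / p)
    (C : ℝ) (hC : 0 < C)
    (hHardy : ∀ u : ℕ → ℝ, (Function.support u).Finite → u 0 = 0 →
      ∑' n : ℕ, |u (n + 1) - u n| ^ p * ((n : ℝ) + 1) ^ α ≥
        C * ∑' n : ℕ, |u (n + 1)| ^ p * ((n : ℝ) + 1) ^ (α - p)) (M : ℕ) :
    C * ∑ k ∈ Finset.range M, 1 / ((k:ℝ) + 1) ≤
      2 + g ^ p * ∑ k ∈ Finset.range M, 1 / ((k:ℝ) + 1) := by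
  have hg0 : 0 < g := by rw [hg]; apply div_pos <;> linarith
  have hp0 : p ≠ 0 := by linarith
  obtain ⟨N, hN⟩ : ∃ N, N = M + 1 := ⟨_, rfl⟩
  have hN0 : (0:ℝ) < N := by rw [hN]; positivity
  obtain ⟨u, hu⟩ : ∃ u : ℕ → ℝ, u = fun n : ℕ =>
    if n ≤ N then (n:ℝ) ^ g else (N:ℝ) ^ (g - 1) * ((2 * N - n : ℕ) : ℝ) := ⟨_, rfl⟩
  have hu1 : ∀ n, n ≤ N → u n = (n:ℝ) ^ g := by
    intro n hn; rw [hu]; simp [hn]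
  have hu2 : ∀ k, k ≤ N → u (N + k) = (N:ℝ) ^ (g - 1) * ((N:ℝ) - k) := by
    intro k hk
    rcases Nat.eq_zero_or_pos k with rfl | h
    · rw [add_zero, hu1 N le_rfl, Real.rpow_sub_one hN0.ne']
      field_simp; simp
    · rw [hu]
      have h1 : ¬ (N + k ≤ N) := by omega
      have h2 : 2 * N - (N + k) = N - k := by omega
      simp only [h1, if_false, h2, Nat.cast_sub hk]
  have hu3 : ∀ n, 2 * N ≤ n → u n = 0 := by
    intro n hn
    rw [hu]
    have h1 : ¬ (n ≤ N) := by omega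
    have h2 : 2 * N - n = 0 := by omega
    simp [h1, h2]
  have hfin : (Function.support u).Finite := by
    apply (Set.finite_Iio (2 * N)).subset
    intro n hn
    by_contra h
    exact hn (hu3 n (by simpa using h))
  have h := hHardy u hfin (by rw [hu1 0 (Nat.zero_le _)]; simp [hg0.ne'])
  rw [tsum_eq_sum (s := Finset.range (N + N)), tsum_eq_sum (s := Finset.range (N + N))] at h
  rotate_left
  · intro n hn
    rw [Finset.mem_range, not_lt] at hn
    rw [hu3 (n + 1) (by omega)]; simp [Real.zero_rpow hp0]
  · intro n hn
    rw [Finset.mem_range, not_lt] at hn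
    rw [hu3 (n + 1) (by omega), hu3 n (by omega)]; simp [Real.zero_rpow hp0]
  have hR : ∑ k ∈ Finset.range M, 1 / ((k:ℝ) + 1) ≤
      ∑ n ∈ Finset.range (N + N), |u (n + 1)| ^ p * ((n : ℝ) + 1) ^ (α - p) := by
    refine le_trans (Finset.sum_le_sum (f := fun k : ℕ => 1 / ((k:ℝ) + 1))
      (g := fun n : ℕ => |u (n + 1)| ^ p * ((n : ℝ) + 1) ^ (α - p)) ?_)
      (Finset.sum_le_sum_of_subset_of_nonneg (Finset.range_mono (by omega)) ?_)
    · intro k hk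
      rw [Finset.mem_range] at hk
      have hk1 : (0:ℝ) < (k:ℝ) + 1 := by positivity
      rw [hu1 (k + 1) (by omega)]
      push_cast
      rw [abs_of_nonneg (by positivity), ← Real.rpow_mul hk1.le, ← Real.rpow_add hk1]
      have : g * p + (α - p) = -1 := by rw [hg]; field_simp; ring
      rw [this, Real.rpow_neg_one, one_div]
    · intros; positivity
  have hL : ∑ n ∈ Finset.range (N + N), |u (n + 1) - u n| ^ p * ((n : ℝ) + 1) ^ α ≤
      2 + g ^ p * ∑ k ∈ Finset.range M, 1 / ((k:ℝ) + 1) := by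
    rw [Finset.sum_range_add]
    have hA : ∑ n ∈ Finset.range N, |u (n + 1) - u n| ^ p * ((n : ℝ) + 1) ^ α ≤
        g ^ p * ∑ k ∈ Finset.range M, 1 / ((k:ℝ) + 1) + 1 := by
      rw [hN, Finset.sum_range_succ', Finset.mul_sum]
      apply add_le_add
      · apply Finset.sum_le_sum
        intro k hk
        rw [Finset.mem_range] at hk
        rw [hu1 (k + 1 + 1) (by omega), hu1 (k + 1) (by omega)]
        have := term_bound p α hp hα g hg (k + 1) (by omega)
        push_cast at this ⊢
        exact this
      · rw [hu1 (0 + 1) (by omega), hu1 0 (by omega)]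
        simp [Real.zero_rpow hg0.ne']
    have hB : ∑ k ∈ Finset.range N, |u (N + k + 1) - u (N + k)| ^ p * (((N + k : ℕ) : ℝ) + 1) ^ α ≤
        1 := by
      calc _ ≤ ∑ k ∈ Finset.range N, 1 / (N:ℝ) := by
            apply Finset.sum_le_sum
            intro k hk
            rw [Finset.mem_range] at hk
            rw [add_assoc, hu2 (k + 1) (by omega), hu2 k (by omega)]
            have e : (N:ℝ) ^ (g - 1) * ((N:ℝ) - ((k + 1 : ℕ) : ℝ)) - (N:ℝ) ^ (g - 1) * ((N:ℝ) - k)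
              = - (N:ℝ) ^ (g - 1) := by push_cast; ring
            rw [e, abs_neg, abs_of_nonneg (by positivity)]
            exact cut_bound p α hp hα g hg N k (by omega)
        _ = 1 := by simp [hN0.ne']
    linarith
  have := mul_le_mul_of_nonneg_left hR hC.le
  linarith

/-- Proposition 4.8 (upper bound): for `p > 1` and `α < 0`, any constant `C > 0` for which
the discrete weighted `p`-Hardy inequality holds satisfies `C ≤ ((p-1-α)/p)^p`, i.e. the
sharp discrete constant is at most the sharp continuous one. -/
theorem stmt_17 (p α : ℝ) (hp : 1 < p) (hα : α < 0)
    (C : ℝ) (hC : 0 < C)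
    (hHardy : ∀ u : ℕ → ℝ, (Function.support u).Finite → u 0 = 0 →
      ∑' n : ℕ, |u (n + 1) - u n| ^ p * ((n : ℝ) + 1) ^ α ≥
        C * ∑' n : ℕ, |u (n + 1)| ^ p * ((n : ℝ) + 1) ^ (α - p)) :
    C ≤ ((p - 1 - α) / p) ^ p := by
  by_contra hlt
  rw [not_le] at hlt
  have hd : 0 < C - ((p - 1 - α) / p) ^ p := by linarith
  obtain ⟨M, hM⟩ := (Real.tendsto_sum_range_one_div_nat_succ_atTop.eventually_gt_atTop
    (2 / (C - ((p - 1 - α) / p) ^ p))).exists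
  have := key p α hp hα _ rfl C hC hHardy M
  rw [div_lt_iff₀ hd] at hM
  linarith
end

section
/- Let α be a negative integer. Then the sharp constant of the discrete weighted Hardy inequality for p = 2 is strictly smaller than the continuous one: the infimum over nonzero finitely supported sequences u : ℕ → ℝ with u_0 = 0 of the quotient ( ∑_{n=1}^∞ |u_n - u_{n-1}|² n^α ) / ( ∑_{n=1}^∞ |u_n|² n^{α-2} ) is strictly less than (α - 1)²/4. -/
/-- Proposition 4.9: for `p = 2` and a negative integer exponent `α`, the sharp constant of
the discrete weighted Hardy inequality is strictly smaller than the continuous sharp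
constant `(α-1)²/4`. -/
theorem stmt_18 (α : ℤ) (hα : α < 0) :
    sInf { q : ℝ | ∃ u : ℕ → ℝ, (Function.support u).Finite ∧ u 0 = 0 ∧ u ≠ 0 ∧
        q = (∑' n : ℕ, |u (n + 1) - u n| ^ 2 * ((n : ℝ) + 1) ^ (α : ℝ)) /
            (∑' n : ℕ, |u (n + 1)| ^ 2 * ((n : ℝ) + 1) ^ ((α : ℝ) - 2)) } <
      ((α : ℝ) - 1) ^ 2 / 4 := by
  have hα1 : (α : ℝ) ≤ -1 := by
    have : α ≤ -1 := by omega
    exact_mod_cast this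
  have h1 : (1 : ℝ) ≤ ((α : ℝ) - 1) ^ 2 / 4 := by nlinarith
  refine lt_of_lt_of_le ?_ h1
  let u : ℕ → ℝ := fun n => if 1 ≤ n ∧ n ≤ 15 then 1 else 0
  have hu : ∀ n, u n = if 1 ≤ n ∧ n ≤ 15 then 1 else 0 := fun n => rfl
  have hnum : (∑' n : ℕ, |u (n + 1) - u n| ^ 2 * ((n : ℝ) + 1) ^ (α : ℝ))
      = 1 + (16 : ℝ) ^ (α : ℝ) := by
    rw [tsum_eq_sum (s := {0, 15})]
    · rw [Finset.sum_pair (by norm_num)]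
      norm_num [hu]
    · intro n hn
      simp only [Finset.mem_insert, Finset.mem_singleton, not_or] at hn
      have : u (n + 1) = u n := by
        rw [hu, hu]
        congr 1
        apply propext
        omega
      simp [this]
  have hden : 1 + (2 : ℝ) ^ ((α : ℝ) - 2) ≤
      (∑' n : ℕ, |u (n + 1)| ^ 2 * ((n : ℝ) + 1) ^ ((α : ℝ) - 2)) := by
    rw [tsum_eq_sum (s := Finset.range 15)]
    · have hs : ({0, 1} : Finset ℕ) ⊆ Finset.range 15 := by decide
      refine le_trans (le_of_eq ?_) (Finset.sum_le_sum_of_subset_of_nonneg hs ?_)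
      · rw [Finset.sum_pair (by norm_num)]
        norm_num [hu]
      · intro i _ _
        positivity
    · intro n hn
      have : u (n + 1) = 0 := by
        rw [hu, if_neg]
        simp only [Finset.mem_range] at hn
        omega
      simp [this]
  have hx0 : (0 : ℝ) < (2 : ℝ) ^ (α : ℝ) := by positivity
  have hx1 : (2 : ℝ) ^ (α : ℝ) ≤ 1 / 2 := by
    calc (2 : ℝ) ^ (α : ℝ) ≤ (2 : ℝ) ^ (-1 : ℝ) :=
          Real.rpow_le_rpow_of_exponent_le (by norm_num) hα1
      _ = 1 / 2 := by rw [Real.rpow_neg_one]; norm_num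
  have h2 : (2 : ℝ) ^ ((α : ℝ) - 2) = (2 : ℝ) ^ (α : ℝ) / 4 := by
    rw [Real.rpow_sub (by norm_num)]; norm_num
  have h16 : (16 : ℝ) ^ (α : ℝ) = ((2 : ℝ) ^ (α : ℝ)) ^ 4 := by
    rw [Real.rpow_intCast, Real.rpow_intCast, show (16 : ℝ) = 2 ^ 4 by norm_num,
      ← zpow_natCast, ← zpow_natCast, ← zpow_mul, ← zpow_mul, mul_comm]
  have hlt : (16 : ℝ) ^ (α : ℝ) < (2 : ℝ) ^ ((α : ℝ) - 2) := by
    rw [h2, h16]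
    generalize (2 : ℝ) ^ (α : ℝ) = x at hx0 hx1
    have h3 : x ^ 3 ≤ (1 / 2) ^ 3 := by gcongr
    nlinarith
  refine lt_of_le_of_lt (csInf_le ⟨0, ?_⟩ ⟨u, ?_, ?_, ?_, rfl⟩) ?_
  · rintro q ⟨v, -, -, -, rfl⟩
    apply div_nonneg <;> exact tsum_nonneg fun n => by positivity
  · refine (Set.finite_Iic 15).subset ?_
    intro n hn
    by_contra h
    simp only [Set.mem_Iic] at h
    exact hn (by rw [hu, if_neg]; omega)
  · simp [hu]
  · intro h
    have := congrFun h 1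
    simp [hu] at this
  · rw [hnum, div_lt_one (lt_of_lt_of_le (by positivity) hden)]
    linarith
end

section
/- Let p > 1 and α > p - 1 be real numbers. For each positive integer n define h(n) = ∑_{k=0}^∞ c_k / n^{2k}, where c_k = (α-p+1)^{2k} / ( 2^{2k} (p-1)^{2k} (2k+1)! ). Then h(n) > 1 for every n ≥ 1, and for every finitely supported sequence u : ℕ → ℝ with u_0 = 0, ∑_{n=1}^∞ |u_n - u_{n-1}|^p n^α / h(n)^{p-1} ≥ ((α - p + 1)/p)^p · ∑_{n=1}^∞ |u_n|^p n^{α-p}. In particular, the discrete Hardy inequality with sharp constant ((α-p+1)/p)^p holds with the strictly positive remainder ∑_{n=1}^∞ |u_n - u_{n-1}|^p n^α (1 - h(n)^{-(p-1)}) on the left-hand side. -/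
theorem aux_edge (p : ℝ) (hp : 1 < p) (a b t : ℝ) (ht : 0 ≤ t) (ht1 : t < 1) :
    t ^ (p-1) * |a| ^ p ≤ t ^ (p-1) * (1-t) ^ (1-p) * |b| ^ p + |b - a| ^ p := by
  rcases ht.eq_or_lt with rfl | ht0
  · rw [Real.zero_rpow (by linarith)]; simp; positivity
  have h1 : 0 < 1 - t := by linarith
  have hc := (convexOn_rpow hp.le).2 (x := |b|/(1-t)) (y := |b-a|/t)
    (by simp; positivity) (by simp; positivity) h1.le ht0.le (by ring)
  simp only [smul_eq_mul] at hc
  have e1 : (1-t) * (|b|/(1-t)) + t * (|b-a|/t) = |b| + |b-a| := by field_simp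
  rw [e1, Real.div_rpow (abs_nonneg _) h1.le, Real.div_rpow (abs_nonneg _) ht0.le] at hc
  have h2 : |a| ^ p ≤ (|b| + |b-a|) ^ p := by
    apply Real.rpow_le_rpow (abs_nonneg _) _ (by linarith)
    have := abs_sub_abs_le_abs_sub a b
    rw [abs_sub_comm] at this; linarith
  have e2 : (1-t) ^ (1-p) = (1-t) / (1-t)^p := by
    rw [Real.rpow_sub h1, Real.rpow_one]
  have e3 : t ^ (p-1) = t^p / t := by
    rw [Real.rpow_sub ht0, Real.rpow_one]
  have hp1 : 0 < t ^ p := Real.rpow_pos_of_pos ht0 _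
  calc t ^ (p-1) * |a| ^ p ≤ t ^ (p-1) * ((1 - t) * (|b| ^ p / (1 - t) ^ p) + t * (|b - a| ^ p / t ^ p)) := by
        gcongr; exact h2.trans hc
    _ = _ := by
        rw [e2, e3]; field_simp

theorem aux_pow (d y : ℝ) (hd : 0 < d) (hd' : d ≤ 1 ∨ 2 ≤ d) (hy : 0 ≤ y) (hy1 : y ≤ 1) :
    2 * d * y ≤ (1+y)^d - (1-y)^d := by
  have key : MonotoneOn (fun y : ℝ => (1+y)^d - (1-y)^d - 2*d*y) (Set.Icc 0 1) := by
    have hder : ∀ x ∈ Set.Ioo (0:ℝ) 1, HasDerivAt (fun y : ℝ => (1+y)^d - (1-y)^d - 2*d*y)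
        (d * ((1+x)^(d-1) + (1-x)^(d-1) - 2)) x := by
      intro x hx
      have h1 : HasDerivAt (fun y : ℝ => (1+y)^d) (1 * d * (1+x)^(d-1)) x :=
        ((hasDerivAt_id x).const_add 1).rpow_const (Or.inl (by have := hx.1; simp; linarith))
      have h2 : HasDerivAt (fun y : ℝ => (1-y)^d) ((-1) * d * (1-x)^(d-1)) x :=
        ((hasDerivAt_id x).const_sub 1).rpow_const (Or.inl (by have := hx.2; simp; linarith))
      have h3 := (h1.sub h2).sub ((hasDerivAt_id x).const_mul (2*d))
      exact h3.congr_deriv (by ring)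
    apply monotoneOn_of_deriv_nonneg (convex_Icc 0 1)
    · apply ContinuousOn.sub
      · apply ContinuousOn.sub
        · exact (continuousOn_const.add continuousOn_id).rpow_const (fun x _ => Or.inr hd.le)
        · exact (continuousOn_const.sub continuousOn_id).rpow_const (fun x _ => Or.inr hd.le)
      · fun_prop
    · rw [interior_Icc]
      exact fun x hx => (hder x hx).differentiableAt.differentiableWithinAt
    · rw [interior_Icc]
      intro x hx
      rw [(hder x hx).deriv]
      obtain ⟨hx0, hx1⟩ := hx
      apply mul_nonneg hd.le
      rcases hd' with h | h
      · have e1 : 1 + (d-1) * Real.log (1+x) ≤ (1+x)^(d-1) := by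
          rw [Real.rpow_def_of_pos (by linarith)]
          linarith [Real.add_one_le_exp (Real.log (1+x) * (d-1))]
        have e2 : 1 + (d-1) * Real.log (1-x) ≤ (1-x)^(d-1) := by
          rw [Real.rpow_def_of_pos (by linarith)]
          linarith [Real.add_one_le_exp (Real.log (1-x) * (d-1))]
        have e3 : Real.log (1+x) + Real.log (1-x) ≤ 0 := by
          rw [← Real.log_mul (by linarith) (by linarith)]
          apply Real.log_nonpos <;> nlinarith
        nlinarith
      · have e1 := one_add_mul_self_le_rpow_one_add (s := x) (by linarith) (p := d-1) (by linarith)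
        have e2 := one_add_mul_self_le_rpow_one_add (s := -x) (by linarith) (p := d-1) (by linarith)
        rw [← sub_eq_add_neg] at e2
        linarith
  have := key (Set.left_mem_Icc.2 zero_le_one) ⟨hy, hy1⟩ hy
  simp at this
  linarith

theorem aux_exp (s : ℝ) (hs : 0 ≤ s) (hs1 : s ≤ 1) : (1-s) * Real.exp (2*s) ≤ 1 + s := by
  rcases hs1.eq_or_lt with rfl | h1
  · norm_num
  have h0 : 0 < 1 - s := by linarith
  have h := Real.le_log_one_add_of_nonneg (x := 2*s/(1-s)) (by positivity)
  have e : 2 * (2*s/(1-s)) / (2*s/(1-s) + 2) = 2 * s := by field_simp; ring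
  have e' : 1 + 2*s/(1-s) = (1+s)/(1-s) := by field_simp; ring
  rw [e, e', Real.le_log_iff_exp_le (by positivity), le_div_iff₀ h0] at h
  linarith

theorem aux_X (γ : ℝ) (hγ : 0 < γ) : ∃ X : ℕ → ℝ, ∀ n : ℕ, 1 ≤ n → 0 ≤ X n ∧
    X n ≤ n * Real.exp (-(1/(2*n))) ∧ X n * Real.exp (1/n) ≤ X (n+1) ∧
    γ * (n:ℝ)^(γ-1) ≤ X (n+1) ^ γ - X n ^ γ := by
  rcases le_total γ 2 with h | h
  · refine ⟨fun n => √(n*(n-1)), fun n hn => ?_⟩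
    have hn' : (1:ℝ) ≤ n := by exact_mod_cast hn
    have hn0 : (0:ℝ) < n := by linarith
    have hy : 1/(n:ℝ) ≤ 1 := by rw [div_le_one hn0]; exact hn'
    have hy0 : 0 < 1/(n:ℝ) := by positivity
    refine ⟨Real.sqrt_nonneg _, ?_, ?_, ?_⟩
    · apply Real.sqrt_le_iff.2 ⟨by positivity, ?_⟩
      have e : ((n:ℝ) * Real.exp (-(1/(2*n))))^2 = n^2 * Real.exp (-(1/n)) := by
        rw [mul_pow, ← Real.exp_nat_mul]; congr 2; push_cast; field_simp
      rw [e]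
      have := Real.add_one_le_exp (-(1/(n:ℝ)))
      calc (n:ℝ)*(n-1) = n^2 * (-(1/n)+1) := by field_simp; ring
        _ ≤ _ := by gcongr
    · apply Real.le_sqrt_of_sq_le
      rw [mul_pow, Real.sq_sqrt (by nlinarith), ← Real.exp_nat_mul]
      have := aux_exp (1/n) hy0.le hy
      push_cast
      calc (n:ℝ)*(n-1) * Real.exp (2*(1/n)) = n^2 * ((1-1/n) * Real.exp (2*(1/n))) := by field_simp
        _ ≤ n^2 * (1+1/n) := by gcongr
        _ = _ := by field_simp; ring
    · have e1 : ∀ z : ℝ, 0 ≤ z → (√z)^γ = z^(γ/2) := by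
        intro z hz
        rw [Real.sqrt_eq_rpow, ← Real.rpow_mul hz]; congr 1; ring
      rw [e1 _ (by push_cast; nlinarith), e1 _ (by nlinarith)]
      have e2 : ((n+1:ℕ):ℝ) * (((n+1:ℕ):ℝ)-1) = n^2*(1+1/n) := by push_cast; field_simp; ring
      have e3 : (n:ℝ)*(n-1) = n^2*(1-1/n) := by field_simp
      have e4 : ((n:ℝ)^2)^(γ/2) = (n:ℝ)^γ := by
        rw [← Real.rpow_natCast, ← Real.rpow_mul hn0.le]; congr 1; push_cast; ring
      rw [e2, e3, Real.mul_rpow (by positivity) (by positivity),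
        Real.mul_rpow (by positivity) (by linarith), e4, Real.rpow_sub hn0, Real.rpow_one]
      have := aux_pow (γ/2) (1/n) (by positivity) (Or.inl (by linarith)) hy0.le hy
      have hpos : 0 < (n:ℝ)^γ := by positivity
      calc γ * ((n:ℝ)^γ / n) = (n:ℝ)^γ * (2 * (γ/2) * (1/n)) := by field_simp
        _ ≤ (n:ℝ)^γ * ((1+1/n)^(γ/2) - (1-1/n)^(γ/2)) := by gcongr
        _ = _ := by ring
  · refine ⟨fun n => n - 1/2, fun n hn => ?_⟩
    have hn' : (1:ℝ) ≤ n := by exact_mod_cast hn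
    have hn0 : (0:ℝ) < n := by linarith
    have hy : 1/(2*n:ℝ) ≤ 1 := by rw [div_le_one (by positivity)]; linarith
    have hy0 : 0 < 1/(2*n:ℝ) := by positivity
    refine ⟨by linarith, ?_, ?_, ?_⟩
    · have := Real.add_one_le_exp (-(1/(2*n:ℝ)))
      calc (n:ℝ)-1/2 = n * (-(1/(2*n))+1) := by field_simp; ring
        _ ≤ _ := by gcongr
    · have := aux_exp (1/(2*n)) hy0.le hy
      have e : 2 * (1/(2*n:ℝ)) = 1/n := by field_simp
      rw [e] at this
      push_cast
      calc ((n:ℝ)-1/2) * Real.exp (1/n) = n * ((1-1/(2*n)) * Real.exp (1/n)) := by field_simp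
        _ ≤ n * (1+1/(2*n)) := by gcongr
        _ = _ := by field_simp; ring
    · have e2 : ((n+1:ℕ):ℝ) - 1/2 = n*(1+1/(2*n)) := by push_cast; field_simp; ring
      have e3 : (n:ℝ)-1/2 = n*(1-1/(2*n)) := by field_simp
      beta_reduce
      rw [e2, e3, Real.mul_rpow (by positivity) (by positivity),
        Real.mul_rpow (by positivity) (by linarith), Real.rpow_sub hn0, Real.rpow_one]
      have := aux_pow γ (1/(2*n)) (by positivity) (Or.inr h) hy0.le hy
      have hpos : 0 < (n:ℝ)^γ := by positivity
      calc γ * ((n:ℝ)^γ / n) = (n:ℝ)^γ * (2 * γ * (1/(2*n))) := by field_simp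
        _ ≤ (n:ℝ)^γ * ((1+1/(2*n))^γ - (1-1/(2*n))^γ) := by gcongr
        _ = _ := by ring

/-- abstract summation -/
theorem aux_sum (p c e : ℝ) (hp : 1 < p) (w t : ℕ → ℝ) (hw : ∀ n, 1 ≤ n → 0 ≤ w n)
    (ht : ∀ n, 1 ≤ n → 0 ≤ t n ∧ t n < 1)
    (hQ : ∀ n : ℕ, 1 ≤ n → c * (n:ℝ)^e ≤ w (n+1) * t (n+1)^(p-1)
      - w n * t n ^ (p-1) * (1 - t n)^(1-p))
    (u : ℕ → ℝ) (hu : (Function.support u).Finite) (hu0 : u 0 = 0) :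
    c * ∑' n : ℕ, |u (n+1)|^p * ((n:ℝ)+1)^e ≤ ∑' n : ℕ, |u (n+1) - u n|^p * w (n+1) := by
  have hp0 : p ≠ 0 := by linarith
  have hind : ∀ N : ℕ, c * ∑ n ∈ Finset.range N, |u n|^p * (n:ℝ)^e
      - w N * t N ^ (p-1) * (1 - t N)^(1-p) * |u N|^p
      ≤ ∑ n ∈ Finset.range N, |u (n+1) - u n|^p * w (n+1) := by
    intro N
    induction N with
    | zero => simp [hu0, Real.zero_rpow hp0]
    | succ N ih =>
      rw [Finset.sum_range_succ, Finset.sum_range_succ]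
      have h1 := aux_edge p hp (u N) (u (N+1)) (t (N+1)) (ht (N+1) (by omega)).1
        (ht (N+1) (by omega)).2
      have h2 := mul_le_mul_of_nonneg_left h1 (hw (N+1) (by omega))
      rcases Nat.eq_zero_or_pos N with rfl | hN
      · simp only [hu0, abs_zero, Real.zero_rpow hp0] at *
        simp at *
        linarith
      · have h3 := mul_le_mul_of_nonneg_right (hQ N hN) (Real.rpow_nonneg (abs_nonneg (u N)) p)
        linarith
  obtain ⟨N, hN⟩ := hu.bddAbove
  have hz : ∀ n, N < n → u n = 0 := by
    intro n hn
    by_contra hne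
    exact absurd (hN hne) (by simpa using hn)
  rw [tsum_eq_sum (s := Finset.range (N+1)), tsum_eq_sum (s := Finset.range (N+2))]
  · have := hind (N+2)
    rw [Finset.sum_range_succ', hz (N+2) (by omega), hu0] at this
    simpa [Real.zero_rpow hp0] using this
  · intro n hn
    have : N + 2 ≤ n := by simpa using hn
    simp [hz n (by omega), hz (n+1) (by omega), Real.zero_rpow hp0]
  · intro n hn
    have : N + 1 ≤ n := by simpa using hn
    simp [hz (n+1) (by omega), Real.zero_rpow hp0]

theorem aux_h (g q : ℝ) (hg : 0 < g) (hq : 0 < q) (n : ℕ) (hn : 1 ≤ n) :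
    ∑' k : ℕ, g ^ (2 * k) / (2 ^ (2 * k) * q ^ (2 * k) * (Nat.factorial (2 * k + 1) : ℝ) *
        (n : ℝ) ^ (2 * k)) = Real.sinh (g/(2*q*n)) / (g/(2*q*n)) := by
  have hn0 : (0:ℝ) < n := by exact_mod_cast hn
  have := ((Real.hasSum_sinh (g/(2*q*n))).div_const (g/(2*q*n))).tsum_eq
  rw [← this]
  congr 1; ext k
  rw [pow_succ, div_pow, mul_pow, mul_pow]
  field_simp

/-- 1-t bound -/
theorem aux_cx (θ a : ℝ) (h0 : 0 ≤ θ) (h1 : θ ≤ 1) :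
    Real.exp ((1-θ) * a) ≤ θ + (1-θ) * Real.exp a := by
  have := convexOn_exp.2 (Set.mem_univ 0) (Set.mem_univ a) h0 (by linarith : 0 ≤ 1 - θ) (by ring)
  simpa using this

/-- Theorem 4.11 (key step, case `α > p - 1`): with
`h(n) = ∑_{k=0}^∞ (α-p+1)^{2k}/(2^{2k}(p-1)^{2k}(2k+1)! n^{2k})`, one has `h(n) > 1` for
all `n ≥ 1`, and the improved discrete Hardy inequality
`∑ |u_n - u_{n-1}|^p n^α / h(n)^{p-1} ≥ ((α-p+1)/p)^p ∑ |u_n|^p n^{α-p}` holds; hence the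
Hardy inequality holds with the strictly positive remainder
`∑ |u_n - u_{n-1}|^p n^α (1 - h(n)^{-(p-1)})`. -/
theorem stmt_19 (p α : ℝ) (hp : 1 < p) (hα : p - 1 < α)
    (h : ℕ → ℝ)
    (hh : ∀ n : ℕ, h n = ∑' k : ℕ, (α - p + 1) ^ (2 * k) /
      (2 ^ (2 * k) * (p - 1) ^ (2 * k) * (Nat.factorial (2 * k + 1) : ℝ) *
        (n : ℝ) ^ (2 * k))) :
    (∀ n : ℕ, 1 ≤ n → 1 < h n) ∧
    ∀ u : ℕ → ℝ, (Function.support u).Finite → u 0 = 0 →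
      ∑' n : ℕ, |u (n + 1) - u n| ^ p * ((n : ℝ) + 1) ^ α / h (n + 1) ^ (p - 1) ≥
        ((α - p + 1) / p) ^ p * ∑' n : ℕ, |u (n + 1)| ^ p * ((n : ℝ) + 1) ^ (α - p) := by
  have hp1 : 0 < p - 1 := by linarith
  have hp0 : 0 < p := by linarith
  obtain ⟨γ, hγ⟩ : ∃ γ, γ = α - p + 1 := ⟨_, rfl⟩
  have hγ0 : 0 < γ := by linarith
  obtain ⟨β, hβ⟩ : ∃ β, β = γ / (p - 1) := ⟨_, rfl⟩
  have hβ0 : 0 < β := by rw [hβ]; positivity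
  have hβγ : β * (p - 1) = γ := by rw [hβ]; field_simp
  have hh' : ∀ n : ℕ, 1 ≤ n → h n = Real.sinh (β / (2 * n)) / (β / (2 * n)) := by
    intro n hn
    have hn0 : (0:ℝ) < n := by exact_mod_cast hn
    rw [hh, ← hγ, aux_h γ (p-1) hγ0 hp1 n hn]
    have : γ / (2 * (p - 1) * n) = β / (2 * n) := by rw [hβ]; field_simp
    rw [this]
  have h1 : ∀ n : ℕ, 1 ≤ n → 1 < h n := by
    intro n hn
    have hn0 : (0:ℝ) < n := by exact_mod_cast hn
    have hx : 0 < β / (2 * n) := by positivity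
    rw [hh' n hn, lt_div_iff₀ hx, one_mul]
    exact Real.self_lt_sinh_iff.2 hx
  refine ⟨h1, fun u hu hu0 => ?_⟩
  obtain ⟨X, hX⟩ := aux_X γ hγ0
  obtain ⟨θ, hθ⟩ : ∃ θ, θ = 1 / p := ⟨_, rfl⟩
  have hθ0 : 0 < θ := by rw [hθ]; positivity
  have hθ1 : θ < 1 := by rw [hθ, div_lt_one hp0]; exact hp
  rw [← hγ]
  have hpos : ∀ n : ℕ, 1 ≤ n → 0 ≤ (n:ℝ) ^ α / h n ^ (p - 1) := by
    intro n hn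
    have := h1 n hn
    have : 0 ≤ h n := by linarith
    positivity
  obtain ⟨t, htd⟩ : ∃ t : ℕ → ℝ, ∀ n, t n = (1 - θ) * ((X n / n) ^ β * (2 * Real.sinh (β / (2 * n)))) :=
    ⟨_, fun n => rfl⟩
  have htb : ∀ n : ℕ, 1 ≤ n → 0 ≤ t n ∧ t n ≤ (1 - θ) * (1 - Real.exp (-(β / n))) := by
    intro n hn
    have hn0 : (0:ℝ) < n := by exact_mod_cast hn
    obtain ⟨hX0, hX1, -, -⟩ := hX n hn
    have hx : 0 < β / (2 * n) := by positivity
    have hs : 0 < Real.sinh (β / (2 * n)) := Real.sinh_pos_iff.2 hx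
    have h1θ : 0 < 1 - θ := by linarith
    rw [htd]
    refine ⟨by positivity, ?_⟩
    apply mul_le_mul_of_nonneg_left _ h1θ.le
    have hZ : (X n / n) ^ β ≤ Real.exp (-(β / (2 * n))) := by
      calc (X n / n) ^ β ≤ (Real.exp (-(1 / (2 * n)))) ^ β := by
            apply Real.rpow_le_rpow (by positivity) _ hβ0.le
            rw [div_le_iff₀ hn0]; linarith
        _ = _ := by rw [← Real.exp_mul]; congr 1; ring
    calc _ ≤ Real.exp (-(β / (2 * n))) * (2 * Real.sinh (β / (2 * n))) := by gcongr
      _ = _ := by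
        have e : -(β / n) = -(β / (2 * n)) + -(β / (2 * n)) := by field_simp; ring
        have e2 : Real.exp (-(β / (2 * n))) * Real.exp (β / (2 * n)) = 1 := by
          rw [← Real.exp_add]; simp
        rw [Real.sinh_eq, e, Real.exp_add]
        linear_combination e2
  have hQe : ∀ n : ℕ, 1 ≤ n → (n:ℝ) ^ α / h n ^ (p - 1) * t n ^ (p - 1) = (γ / p) ^ (p - 1) * X n ^ γ := by
    intro n hn
    have hn0 : (0:ℝ) < n := by exact_mod_cast hn
    obtain ⟨hX0, -, -, -⟩ := hX n hn
    have hx : 0 < β / (2 * n) := by positivity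
    have hhp : 0 < h n := by linarith [h1 n hn]
    have et : t n = (X n / n) ^ β * (h n / n) * (γ / p) := by
      rw [htd, hh' n hn, ← hβγ, hθ]
      field_simp
    have ea : (n:ℝ) ^ α = (n:ℝ) ^ γ * (n:ℝ) ^ (p - 1) := by
      rw [← Real.rpow_add hn0]; congr 1; linarith
    rw [et, Real.mul_rpow (by positivity) (by positivity), Real.mul_rpow (by positivity) (by positivity),
      ← Real.rpow_mul (by positivity), hβγ, Real.div_rpow hX0 hn0.le, Real.div_rpow hhp.le hn0.le, ea]
    have a1 : 0 < (n:ℝ) ^ γ := by positivity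
    have a2 : 0 < (n:ℝ) ^ (p - 1) := by positivity
    have a3 : 0 < h n ^ (p - 1) := by positivity
    field_simp
  have main := aux_sum p ((γ / p) ^ p) (α - p) hp (fun n => (n:ℝ) ^ α / h n ^ (p - 1)) t hpos
    (fun n hn => ⟨(htb n hn).1, by
      have := (htb n hn).2
      nlinarith [Real.exp_pos (-(β / (n:ℝ)))]⟩) ?_ u hu hu0
  · refine ge_iff_le.2 (main.trans (le_of_eq ?_))
    congr 1; ext n; push_cast; ring
  · intro n hn
    beta_reduce
    have hn0 : (0:ℝ) < n := by exact_mod_cast hn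
    rw [hQe n hn, hQe (n+1) (by omega)]
    obtain ⟨hX0, -, hX2, hX3⟩ := hX n hn
    have hc1 := aux_cx θ (-(β / n)) hθ0.le hθ1.le
    have hc2 := aux_cx θ (γ / n) hθ0.le hθ1.le
    have b1 : Real.exp ((1 - θ) * -(β / n)) ≤ 1 - t n := by
      have := (htb n hn).2
      linarith
    have b2 : (1 - t n) ^ (1 - p) ≤ θ + (1 - θ) * Real.exp (γ / n) := by
      calc (1 - t n) ^ (1 - p) ≤ (Real.exp ((1 - θ) * -(β / n))) ^ (1 - p) :=
            Real.rpow_le_rpow_of_nonpos (Real.exp_pos _) b1 (by linarith)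
        _ = Real.exp ((1 - θ) * (γ / n)) := by
            rw [← Real.exp_mul, ← hβγ]; congr 1; ring
        _ ≤ _ := hc2
    have b3 : X n ^ γ * Real.exp (γ / n) ≤ X (n+1) ^ γ := by
      calc X n ^ γ * Real.exp (γ / n) = (X n * Real.exp (1 / n)) ^ γ := by
            rw [Real.mul_rpow hX0 (Real.exp_pos _).le, ← Real.exp_mul]; congr 2; ring
        _ ≤ _ := Real.rpow_le_rpow (by positivity) hX2 hγ0.le
    have b4 : X n ^ γ * (1 - t n) ^ (1 - p) ≤ X n ^ γ * (θ + (1 - θ) * Real.exp (γ / n)) := by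
      gcongr
    have b5 : θ * (γ * (n:ℝ) ^ (γ - 1)) ≤ X (n+1) ^ γ - X n ^ γ * (1 - t n) ^ (1 - p) := by
      have c1 := mul_le_mul_of_nonneg_left hX3 hθ0.le
      have c2 := mul_le_mul_of_nonneg_left b3 (by linarith : 0 ≤ 1 - θ)
      linarith
    have e1 : α - p = γ - 1 := by linarith
    have e2 : (γ / p) ^ p = (γ / p) ^ (p - 1) * (γ / p) := by
      rw [Real.rpow_sub (by positivity), Real.rpow_one]; field_simp
    have hg : 0 ≤ (γ / p) ^ (p - 1) := by positivity
    rw [e1, e2]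
    have := mul_le_mul_of_nonneg_left b5 hg
    rw [hθ] at this
    calc _ = (γ / p) ^ (p - 1) * (1 / p * (γ * (n:ℝ) ^ (γ - 1))) := by ring
      _ ≤ _ := this
      _ = _ := by ring
end
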